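/- Let 1 ≤ p < n/2, let S be a symmetric endomorphism of V with associated bilinear form s(X,Y) = g(S(X),Y), and set h = (1/(n−2p))·s − (tr(S)/(2(n−p)(n−2p)))·g. Then every p-form ω on V satisfies ⟨Ric_{h⧆g}(ω), ω⟩ = −⟨Sω, ω⟩. -/

import Mathlib

/-! The identity holds pointwise, before pairing with `ω`. Write `h(X,Y) = g(HX,Y)` with
`H = a S - b id` symmetric. Then `R = h ⧆ g` has curvature endomorphism
`R(X,Y)Z = h(X,Z)Y - g(Y,Z)HX + g(X,Z)HY - h(Y,Z)X` (`curvOp_knProd`).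

In `Ric_R(ω)(X₁,…,X_p)`, the slot `i` receiving `eⱼ` and the slot `l` on which `R(Xᵢ,eⱼ)` acts
either coincide or differ.
* For `l = i` the contraction is `Σⱼ R(X,eⱼ)eⱼ = -(n-2)HX - tr(H)X` (`sum_curvOp_diag`).
* For `l ≠ i` only an alternating bilinear form in these two slots matters; the contraction yields
  `ω(…,HXᵢ,…) + ω(…,HX_l,…)` (`sum_curvOp_offdiag`). The trace-type terms `Σⱼ B(eⱼ,eⱼ)` and
  `Σⱼ B(eⱼ,Heⱼ)` vanish because `B` is alternating and `H` symmetric.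

Summing, with the minus sign in the action on tensors, `Ric_R(ω) = -(n-2p) Hω + p tr(H) ω` (`ricTerm_knProd`), and the coefficients `a`, `b` are
chosen so that the multiples of `ω` cancel and `-Sω` remains. -/

open scoped RealInnerProductSpace BigOperators
open Finset

noncomputable section

variable {V : Type*} [NormedAddCommGroup V] [InnerProductSpace ℝ V]

/-- The action `(L T)(X₁,…,X_k) = −Σᵢ T(X₁,…,L(Xᵢ),…,X_k)` of a map `L : V → V`
on a `(0,k)`-tensor `T`. -/
def tact {k : ℕ} (L : V → V) (T : (Fin k → V) → ℝ) (X : Fin k → V) : ℝ :=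
  -∑ i, T (Function.update X i (L (X i)))

/-- The Kulkarni–Nomizu product of two bilinear forms. -/
def knProd (s₁ s₂ : V → V → ℝ) (X Y Z W : V) : ℝ :=
  s₁ X Z * s₂ Y W - s₁ X W * s₂ Y Z + s₁ Y W * s₂ X Z - s₁ Y Z * s₂ X W

/-- The inner product `g` as a bilinear form. -/
def gf (X Y : V) : ℝ := ⟪X, Y⟫

/-- The curvature endomorphism `R(X,Y)`, determined by `g(R(X,Y)Z,W) = R(X,Y,Z,W)`,
expressed via the orthonormal basis `e`. -/
def curvOp {n : ℕ} (e : Fin n → V) (R : V → V → V → V → ℝ) (X Y Z : V) : V :=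
  ∑ a, R X Y Z (e a) • e a

/-- The curvature term `Ric_R(T)(X₁,…,X_k) = Σᵢ Σⱼ ((R(Xᵢ,eⱼ))T)(X₁,…,eⱼ,…,X_k)`. -/
def ricTerm {n k : ℕ} (e : Fin n → V) (R : V → V → V → V → ℝ)
    (T : (Fin k → V) → ℝ) (X : Fin k → V) : ℝ :=
  ∑ i : Fin k, ∑ j : Fin n, tact (curvOp e R (X i) (e j)) T (Function.update X i (e j))

/-- The inner product of two `(0,k)`-tensors with respect to the orthonormal basis `e`. -/
def tinner {n k : ℕ} (e : Fin n → V) (S T : (Fin k → V) → ℝ) : ℝ :=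
  ∑ I : Fin k → Fin n, S (fun m => e (I m)) * T (fun m => e (I m))

/-- The skew endomorphism `(A ∧ B)Z = g(A,Z)B − g(B,Z)A`. -/
def wedgeOp (A B Z : V) : V := ⟪A, Z⟫ • B - ⟪B, Z⟫ • A

section Pointwise

variable {n : ℕ} (e : OrthonormalBasis (Fin n) ℝ V) (H : V →ₗ[ℝ] V)

theorem curvOp_knProd (h : V → V → ℝ) (hh : ∀ X Y, h X Y = ⟪H X, Y⟫) (X Y Z : V) :
    curvOp e (knProd h gf) X Y Z =
      h X Z • Y - ⟪Y, Z⟫ • H X + ⟪X, Z⟫ • H Y - h Y Z • X := by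
  rw [← e.sum_repr' (h X Z • Y - ⟪Y, Z⟫ • H X + ⟪X, Z⟫ • H Y - h Y Z • X), curvOp]
  refine Finset.sum_congr rfl fun a _ => ?_
  congr 1
  simp only [knProd, gf, inner_sub_right, inner_add_right, inner_smul_right]
  rw [hh X (e a), hh Y (e a), real_inner_comm (e a) (H X), real_inner_comm (e a) (H Y),
    real_inner_comm (e a) X, real_inner_comm (e a) Y]
  ring

theorem sum_curvOp_diag (h : V → V → ℝ) (hh : ∀ X Y, h X Y = ⟪H X, Y⟫) (X : V) :
    ∑ j, curvOp e (knProd h gf) X (e j) (e j) =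
      -(((n : ℝ) - 2) • H X) - (∑ j, ⟪H (e j), e j⟫) • X := by
  have h1 : ∑ j, h X (e j) • e j = H X := by
    conv_rhs => rw [← e.sum_repr' (H X)]
    exact Finset.sum_congr rfl fun j _ => by rw [hh, real_inner_comm]
  have h2 : ∑ j, ⟪X, e j⟫ • H (e j) = H X := by
    conv_rhs => rw [← e.sum_repr' X, map_sum]
    exact Finset.sum_congr rfl fun j _ => by rw [map_smul, real_inner_comm]
  have h3 : ∑ j, ⟪e j, e j⟫ • H X = (n : ℝ) • H X := by
    simp [Nat.cast_smul_eq_nsmul]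
  simp only [curvOp_knProd e H h hh, Finset.sum_sub_distrib, Finset.sum_add_distrib, h1, h2, h3]
  simp only [hh, ← Finset.sum_smul]
  module

/-- An alternating bilinear form has zero trace against a symmetric endomorphism. -/
theorem sum_alt_symm (hH : ∀ X Y : V, ⟪H X, Y⟫ = ⟪X, H Y⟫)
    (B : V →ₗ[ℝ] V →ₗ[ℝ] ℝ) (hB : ∀ x y, B x y = -B y x) :
    ∑ j, B (e j) (H (e j)) = 0 := by
  have h1 : ∑ j, B (e j) (H (e j)) = ∑ j, ∑ k, ⟪e k, H (e j)⟫ * B (e j) (e k) := by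
    refine Finset.sum_congr rfl fun j _ => ?_
    conv_lhs => rw [← e.sum_repr' (H (e j))]
    simp
  have h2 : ∑ j, ∑ k, ⟪e k, H (e j)⟫ * B (e j) (e k)
      = -∑ j, ∑ k, ⟪e k, H (e j)⟫ * B (e j) (e k) := by
    conv_lhs => rw [Finset.sum_comm]
    simp only [← Finset.sum_neg_distrib]
    refine Finset.sum_congr rfl fun j _ => Finset.sum_congr rfl fun k _ => ?_
    rw [hB (e k) (e j), ← hH (e j) (e k), real_inner_comm]
    ring
  linarith

theorem sum_curvOp_offdiag (hH : ∀ X Y : V, ⟪H X, Y⟫ = ⟪X, H Y⟫)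
    (h : V → V → ℝ) (hh : ∀ X Y, h X Y = ⟪H X, Y⟫)
    (B : V →ₗ[ℝ] V →ₗ[ℝ] ℝ) (hB : ∀ x y, B x y = -B y x) (X Z : V) :
    ∑ j, B (e j) (curvOp e (knProd h gf) X (e j) Z) = B (H X) Z + B X (H Z) := by
  have h0 : ∀ x, B x x = 0 := fun x => by linarith [hB x x]
  have h2 : ∑ j, ⟪e j, Z⟫ * B (e j) (H X) = B Z (H X) := by
    conv_rhs => rw [← e.sum_repr' Z]
    simp
  have h3 : ∑ j, h (e j) Z * B (e j) X = B (H Z) X := by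
    conv_rhs => rw [← e.sum_repr' (H Z)]
    simp [hh, hH]
  simp only [curvOp_knProd e H h hh, map_sub, map_add, map_smul, smul_eq_mul, h0, mul_zero,
    Finset.sum_sub_distrib, Finset.sum_add_distrib, h2, h3, ← Finset.mul_sum,
    sum_alt_symm e H hH B hB, Finset.sum_const_zero]
  rw [hB Z, hB (H Z)]
  ring

/-- The bilinear form obtained from `ω` by freezing every argument except slots `i ≠ l`. -/
def twoSlot {p : ℕ} (ω : AlternatingMap ℝ V ℝ (Fin p)) (X : Fin p → V) {i l : Fin p}
    (hil : l ≠ i) : V →ₗ[ℝ] V →ₗ[ℝ] ℝ :=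
  LinearMap.mk₂ ℝ (fun u v => ω (Function.update (Function.update X i u) l v))
    (fun u u' v => by
      simp only [Function.update_comm hil.symm, AlternatingMap.map_update_add])
    (fun c u v => by
      simp only [Function.update_comm hil.symm, AlternatingMap.map_update_smul])
    (fun u v v' => by simp only [AlternatingMap.map_update_add])
    (fun c u v => by simp only [AlternatingMap.map_update_smul])

theorem twoSlot_apply {p : ℕ} (ω : AlternatingMap ℝ V ℝ (Fin p)) (X : Fin p → V) {i l : Fin p}
    (hil : l ≠ i) (u v : V) :
    twoSlot ω X hil u v = ω (Function.update (Function.update X i u) l v) := rfl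

theorem twoSlot_swap {p : ℕ} (ω : AlternatingMap ℝ V ℝ (Fin p)) (X : Fin p → V) {i l : Fin p}
    (hil : l ≠ i) (u v : V) : twoSlot ω X hil u v = -twoSlot ω X hil v u := by
  have h0 : ∀ w, twoSlot ω X hil w w = 0 := fun w => by
    rw [twoSlot_apply]
    exact ω.map_eq_zero_of_eq _ (by simp [Function.update_of_ne hil.symm]) hil
  have := h0 (u + v)
  simp only [map_add, LinearMap.add_apply, h0] at this
  linarith

/-- Pointwise form: `Ric_{h ⧆ g}(ω) = -(n-2p) Hω + p tr(H) ω`. -/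
theorem ricTerm_knProd {p : ℕ} (hH : ∀ X Y : V, ⟪H X, Y⟫ = ⟪X, H Y⟫)
    (h : V → V → ℝ) (hh : ∀ X Y, h X Y = ⟪H X, Y⟫)
    (ω : AlternatingMap ℝ V ℝ (Fin p)) (X : Fin p → V) :
    ricTerm e (knProd h gf) ω X =
      -((n : ℝ) - 2 * p) * tact H ω X + p * (∑ j, ⟪H (e j), e j⟫) * ω X := by
  set t := ∑ j, ⟪H (e j), e j⟫ with ht
  set A : Fin p → ℝ := fun i => ω (Function.update X i (H (X i))) with hA
  have key : ∀ i l : Fin p,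
      ∑ j, ω (Function.update (Function.update X i (e j)) l
        (curvOp e (knProd h gf) (X i) (e j) (Function.update X i (e j) l)))
      = A i + A l - (if l = i then n * A i + t * ω X else 0) := by
    intro i l
    by_cases hil : l = i
    · subst hil
      have := congrArg (fun v => ω (Function.update X l v)) (sum_curvOp_diag e H h hh (X l))
      simp only [Function.update_idem, Function.update_self, if_true]
      rw [← AlternatingMap.map_update_sum]
      rw [this]
      simp only [AlternatingMap.map_update_sub, AlternatingMap.map_update_neg,
        AlternatingMap.map_update_smul, Function.update_eq_self, smul_eq_mul, ← ht, hA]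
      ring
    · simp only [Function.update_of_ne hil, if_neg hil, ← twoSlot_apply ω X hil]
      rw [sum_curvOp_offdiag e H hH h hh _ (twoSlot_swap ω X hil)]
      have e1 : Function.update (Function.update X i (H (X i))) l (X l)
          = Function.update X i (H (X i)) := by
        rw [Function.update_comm (Ne.symm hil), Function.update_eq_self]
      simp only [twoSlot_apply, Function.update_eq_self, e1, hA, sub_zero]
  simp only [ricTerm, tact, Finset.sum_neg_distrib]
  have : ∀ i : Fin p, ∑ j, ∑ l, ω (Function.update (Function.update X i (e j)) l
        (curvOp e (knProd h gf) (X i) (e j) (Function.update X i (e j) l)))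
      = p * A i + ∑ l, A l - (n * A i + t * ω X) := by
    intro i
    rw [Finset.sum_comm, Finset.sum_congr rfl fun l _ => key i l]
    simp [Finset.sum_sub_distrib, Finset.sum_add_distrib]
  rw [Finset.sum_congr rfl fun i _ => this i]
  simp only [Finset.sum_sub_distrib, Finset.sum_add_distrib, ← Finset.mul_sum, Finset.sum_const,
    Finset.card_univ, Fintype.card_fin, nsmul_eq_mul]
  ring

end Pointwise

/-- with `h = (1/(n−2p)) s − (tr S / (2(n−p)(n−2p))) g`, every `p`-form
satisfies `⟨Ric_{h⧆g}(ω), ω⟩ = −⟨Sω, ω⟩`. -/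
theorem stmt16 {n p : ℕ} (hp : 1 ≤ p) (hpn : 2 * p < n)
    (e : OrthonormalBasis (Fin n) ℝ V)
    (S : V →ₗ[ℝ] V) (hSsym : ∀ X Y : V, ⟪S X, Y⟫ = ⟪X, S Y⟫)
    (s : V → V → ℝ) (hs : ∀ X Y : V, s X Y = ⟪S X, Y⟫)
    (h : V → V → ℝ)
    (hh : ∀ X Y : V, h X Y =
      (1 / ((n : ℝ) - 2 * p)) * s X Y -
        ((∑ a : Fin n, ⟪S (e a), e a⟫) / (2 * ((n : ℝ) - p) * ((n : ℝ) - 2 * p))) * ⟪X, Y⟫)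
    (ω : AlternatingMap ℝ V ℝ (Fin p)) :
    tinner ⇑e (ricTerm ⇑e (knProd h gf) ⇑ω) ⇑ω = -(tinner ⇑e (tact ⇑S ⇑ω) ⇑ω) := by
  have hpn' : (2 : ℝ) * p < n := by exact_mod_cast hpn
  have hp0 : (0 : ℝ) ≤ p := Nat.cast_nonneg p
  have d1 : (n : ℝ) - 2 * p ≠ 0 := by linarith
  have d2 : (n : ℝ) - p ≠ 0 := by linarith
  set t := ∑ a : Fin n, ⟪S (e a), e a⟫ with ht
  set a : ℝ := 1 / ((n : ℝ) - 2 * p) with ha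
  set b : ℝ := t / (2 * ((n : ℝ) - p) * ((n : ℝ) - 2 * p)) with hb
  let H : V →ₗ[ℝ] V := a • S - b • LinearMap.id
  have hHx : ∀ X, H X = a • S X - b • X := fun X => by simp [H]
  have hH : ∀ X Y : V, ⟪H X, Y⟫ = ⟪X, H Y⟫ := fun X Y => by
    simp only [hHx, inner_sub_left, inner_sub_right, inner_smul_left, inner_smul_right, hSsym]
    simp
  have hhH : ∀ X Y, h X Y = ⟪H X, Y⟫ := fun X Y => by
    simp [hh, hs, hHx, inner_sub_left, inner_smul_left]
  have htr : ∑ j, ⟪H (e j), e j⟫ = a * t - n * b := by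
    simp [hHx, inner_sub_left, inner_smul_left, Finset.sum_sub_distrib, ← Finset.mul_sum, ht]
  have hact : ∀ X, tact H ω X = a * tact S ω X + p * b * ω X := fun X => by
    simp only [tact, hHx, AlternatingMap.map_update_sub, AlternatingMap.map_update_smul,
      Function.update_eq_self, Finset.sum_sub_distrib, smul_eq_mul, ← Finset.mul_sum,
      Finset.sum_const, Finset.card_univ, Fintype.card_fin, nsmul_eq_mul]
    ring
  simp only [tinner, ← Finset.sum_neg_distrib]
  refine Finset.sum_congr rfl fun I _ => ?_
  rw [ricTerm_knProd e H hH h hhH ω, htr, hact, ha, hb]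
  field_simp
  ring
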